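/- Let F and G be analytic on the open unit disk 𝔻 with F(0) = G(0). Suppose H(z) = zG'(z) is starlike univalent on 𝔻 (i.e., H is univalent with H(0)=0, H'(0)≠0, and Re(zH'(z)/H(z)) > 0), and zF'(z) is subordinate to zG'(z) on 𝔻. Then F is subordinate to G on 𝔻. -/

import Mathlib

open Complex Metric

/-- `f` is subordinate to `g` on the unit disk. -/
def Subord (f g : ℂ → ℂ) : Prop :=
  ∃ w : ℂ → ℂ, DifferentiableOn ℂ w (ball (0 : ℂ) 1) ∧ w 0 = 0 ∧
    (∀ z ∈ ball (0 : ℂ) 1, w z ∈ ball (0 : ℂ) 1) ∧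
    ∀ z ∈ ball (0 : ℂ) 1, f z = g (w z)


lemma aux_dir (ψ : ℂ → ℂ) (c v : ℂ) (hψ : HasDerivAt ψ c 0) (hv : v.re ≤ 0)
    (hle : ∀ᶠ ζ in nhds (0 : ℂ), ζ.re ≤ 0 → (ψ ζ).re ≤ (ψ 0).re) : (c * v).re ≤ 0 := by
  have h1 : HasDerivAt (fun t : ℝ => ψ ((t : ℂ) * v)) (c * v) 0 := by
    have h2 : HasDerivAt (fun t : ℝ => (t : ℂ) * v) v 0 := by
      simpa using (Complex.ofRealCLM.hasDerivAt (x := (0:ℝ))).mul_const v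
    have h3 : HasDerivAt ψ c (((0:ℝ) : ℂ) * v) := by simpa using hψ
    exact h3.comp (0:ℝ) h2
  have h4 : HasDerivAt (fun t : ℝ => (ψ ((t : ℂ) * v)).re) (c * v).re 0 :=
    (Complex.reCLM.hasFDerivAt.comp_hasDerivAt (0:ℝ) h1)
  have h5 := (hasDerivWithinAt_iff_tendsto_slope' (s := Set.Ioi (0:ℝ)) (by simp)).1
    h4.hasDerivWithinAt
  refine le_of_tendsto h5 ?_
  have h6 : Filter.Tendsto (fun t : ℝ => (t : ℂ) * v) (nhdsWithin 0 (Set.Ioi 0)) (nhds 0) := by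
    have : ContinuousAt (fun t : ℝ => (t : ℂ) * v) 0 := by fun_prop
    have h7 := this.tendsto
    simp only [ofReal_zero, zero_mul] at h7
    exact h7.mono_left nhdsWithin_le_nhds
  filter_upwards [h6.eventually hle, self_mem_nhdsWithin] with t ht ht0
  have ht0 : 0 < t := ht0
  have h8 := ht (by simpa using mul_nonpos_of_nonneg_of_nonpos ht0.le hv)
  rw [slope_def_field]
  apply div_nonpos_of_nonpos_of_nonneg
  · simpa using h8
  · simpa using ht0.le

lemma aux_J (ψ : ℂ → ℂ) (c : ℂ) (hψ : HasDerivAt ψ c 0)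
    (hle : ∀ᶠ ζ in nhds (0 : ℂ), ζ.re ≤ 0 → (ψ ζ).re ≤ (ψ 0).re) : c.im = 0 ∧ 0 ≤ c.re := by
  have h1 := aux_dir ψ c (-1) hψ (by simp) hle
  have h2 := aux_dir ψ c I hψ (by simp) hle
  have h3 := aux_dir ψ c (-I) hψ (by simp) hle
  simp at h1 h2 h3
  exact ⟨by linarith, by linarith⟩

lemma aux_log (g : ℂ → ℂ) (hg : DifferentiableOn ℂ g (ball 0 1))
    (hne : ∀ z ∈ ball (0:ℂ) 1, g z ≠ 0) :
    ∃ h : ℂ → ℂ, ∀ z ∈ ball (0:ℂ) 1, HasDerivAt h (deriv g z / g z) z ∧ exp (h z) = g z := by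
  have hd : DifferentiableOn ℂ (fun z => deriv g z / g z) (ball 0 1) :=
    (hg.deriv isOpen_ball).div hg hne
  obtain ⟨h, h0, hh⟩ := hd.isExactOn_ball.with_val_at 0 (log (g 0))
  refine ⟨h, fun z hz => ⟨hh z hz, ?_⟩⟩
  have hder : ∀ x ∈ ball (0:ℂ) 1, HasDerivAt (fun x => g x * exp (-h x)) 0 x := by
    intro x hx
    have h1 := (hg.differentiableAt (isOpen_ball.mem_nhds hx)).hasDerivAt
    have h2 := h1.mul ((hh x hx).neg.cexp)
    refine h2.congr_deriv ?_
    have := hne x hx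
    field_simp
    ring
  have hc := isOpen_ball.is_const_of_deriv_eq_zero (convex_ball (0:ℂ) 1).isPreconnected
    (fun x hx => (hder x hx).differentiableAt.differentiableWithinAt)
    (fun x hx => (hder x hx).deriv) hz (mem_ball_self one_pos)
  have hg0 := hne 0 (mem_ball_self one_pos)
  simp only [h0, Complex.exp_neg, exp_log hg0, mul_inv_cancel₀ hg0] at hc
  have := exp_ne_zero (h z)
  field_simp at hc
  exact hc.symm

lemma aux_S (g : ℂ → ℂ) (hg : DifferentiableOn ℂ g (ball 0 1))
    (hne : ∀ z ∈ ball (0:ℂ) 1, g z ≠ 0)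
    (hre : ∀ z ∈ ball (0:ℂ) 1, z ≠ 0 → 0 < (1 + z * (deriv g z / g z)).re)
    (w u : ℂ) (hw : w ∈ ball (0:ℂ) 1) (hu : u ∈ ball (0:ℂ) 1) (hw0 : w ≠ 0) (hu0 : u ≠ 0)
    (c : ℝ) (hc0 : 0 < c) (hc1 : c ≤ 1) (heq : w * g w = c * (u * g u)) :
    ‖w‖ ≤ ‖u‖ ∧ (c = 1 → w = u) := by
  obtain ⟨h, hh⟩ := aux_log g hg hne
  set L : ℂ → ℂ := fun ζ => ζ + h (exp ζ) with hL
  have hmem : ∀ ζ : ℂ, ζ.re < 0 → exp ζ ∈ ball (0:ℂ) 1 := by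
    intro ζ hζ
    simpa [Complex.norm_exp] using hζ
  have hLd : ∀ ζ : ℂ, ζ.re < 0 →
      HasDerivAt L (1 + exp ζ * (deriv g (exp ζ) / g (exp ζ))) ζ := by
    intro ζ hζ
    have h1 := (hh _ (hmem ζ hζ)).1.comp ζ (Complex.hasDerivAt_exp ζ)
    refine ((hasDerivAt_id ζ).add h1).congr_deriv ?_
    ring
  have hlogre : ∀ z ∈ ball (0:ℂ) 1, z ≠ 0 → (log z).re < 0 := by
    intro z hz hz0
    rw [log_re]
    exact Real.log_neg (norm_pos_iff.2 hz0) (by simpa using hz)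
  have hexpL : ∀ z ∈ ball (0:ℂ) 1, z ≠ 0 → exp (L (log z)) = z * g z := by
    intro z hz hz0
    simp only [hL]
    rw [Complex.exp_add, exp_log hz0, (hh z hz).2]
  have hcc : (c : ℂ) ≠ 0 := by exact_mod_cast hc0.ne'
  have h1 : exp (L (log w)) = exp ((Real.log c : ℝ) + L (log u)) := by
    rw [hexpL w hw hw0, Complex.exp_add, hexpL u hu hu0, ← Complex.ofReal_exp,
      Real.exp_log hc0, heq]
  obtain ⟨n, hn⟩ := exp_eq_exp_iff_exists_int.1 h1
  set a := log w with ha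
  set b := log u + n * (2 * Real.pi * I) with hb
  have hexpb : exp b = u := by
    rw [hb, Complex.exp_add, exp_log hu0, Complex.exp_int_mul_two_pi_mul_I, mul_one]
  have hLb : L b = L (log u) + n * (2 * Real.pi * I) := by
    simp only [hL]
    rw [hexpb, exp_log hu0, hb]; ring
  have hLab : L a - L b = (Real.log c : ℝ) := by
    rw [hLb, hn]; ring
  have hare : a.re < 0 := hlogre w hw hw0
  have hbre' : b.re = Real.log ‖u‖ := by
    simp [hb, log_re]
  have hbre : b.re < 0 := by
    rw [hbre', ← log_re]; exact hlogre u hu hu0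
  by_cases hab : a = b
  · have : w = u := by rw [← hexpb, ← hab, ha, exp_log hw0]
    exact ⟨by rw [this], fun _ => this⟩
  have hpos : 0 < ((L a - L b) * (starRingEnd ℂ) (a - b)).re := by
    set d := a - b with hd
    have hd0 : d ≠ 0 := sub_ne_zero.2 hab
    have hseg : ∀ t ∈ Set.Icc (0:ℝ) 1, (b + t * d).re < 0 := by
      intro t ht
      have : (b + t * d).re = (1 - t) * b.re + t * a.re := by
        simp [hd]; ring
      rw [this]
      rcases ht.1.eq_or_lt with h0 | h0
      · rw [← h0]; simpa using hbre
      · nlinarith [ht.2, mul_neg_of_pos_of_neg h0 hare,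
          mul_nonpos_of_nonneg_of_nonpos (sub_nonneg.2 ht.2) hbre.le]
    have hder : ∀ t ∈ Set.Icc (0:ℝ) 1,
        HasDerivAt (fun t : ℝ => (L (b + t * d) * (starRingEnd ℂ) d).re)
          ((1 + exp (b + t * d) * (deriv g (exp (b + t * d)) / g (exp (b + t * d)))).re
            * normSq d) t := by
      intro t ht
      have h2 : HasDerivAt (fun t : ℝ => b + (t : ℂ) * d) d t := by
        simpa using ((Complex.ofRealCLM.hasDerivAt (x := t)).mul_const d).const_add b
      have h3 := ((hLd _ (hseg t ht)).comp t h2).mul_const ((starRingEnd ℂ) d)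
      have h4 := Complex.reCLM.hasFDerivAt.comp_hasDerivAt t h3
      refine h4.congr_deriv ?_
      rw [mul_assoc, Complex.mul_conj, Complex.reCLM_apply, Complex.re_mul_ofReal]
    have hmono : StrictMonoOn (fun t : ℝ => (L (b + t * d) * (starRingEnd ℂ) d).re)
        (Set.Icc 0 1) := by
      apply strictMonoOn_of_deriv_pos (convex_Icc 0 1)
      · intro t ht
        exact (hder t ht).continuousAt.continuousWithinAt
      · intro t ht
        have ht' := interior_subset ht
        rw [(hder t ht').deriv]
        exact mul_pos (hre _ (hmem _ (hseg t ht')) (exp_ne_zero _)) (normSq_pos.2 hd0)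
    have h5 := hmono (Set.left_mem_Icc.2 zero_le_one) (Set.right_mem_Icc.2 zero_le_one) one_pos
    have h6 : b + d = a := by rw [hd]; ring
    simp only [ofReal_zero, zero_mul, add_zero, ofReal_one, one_mul, h6] at h5
    rw [sub_mul, Complex.sub_re]
    linarith
  rw [hLab, Complex.re_ofReal_mul, Complex.conj_re, Complex.sub_re] at hpos
  have hlc : Real.log c ≤ 0 := Real.log_nonpos hc0.le hc1
  have hlt : a.re - b.re < 0 := by
    by_contra hcon
    push Not at hcon
    nlinarith [mul_nonpos_of_nonpos_of_nonneg hlc hcon]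
  constructor
  · rw [ha, log_re, hbre'] at hlt
    have := (Real.log_lt_log_iff (norm_pos_iff.2 hw0) (norm_pos_iff.2 hu0)).1 (by linarith)
    exact this.le
  · intro h1
    rw [h1] at hpos
    simp at hpos

lemma aux_LI (F G : ℂ → ℂ)
    (hF : DifferentiableOn ℂ F (ball (0 : ℂ) 1))
    (hG : DifferentiableOn ℂ G (ball (0 : ℂ) 1))
    (z u : ℂ) (hz : z ∈ ball (0:ℂ) 1) (hu : u ∈ ball (0:ℂ) 1) (hne : deriv G u ≠ 0)
    (h : G u = F z) :
    ∃ w : ℂ → ℂ, w z = u ∧ HasDerivAt w (deriv F z / deriv G u) z ∧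
      ∀ᶠ x in nhds z, G (w x) = F x := by
  have hs : HasStrictDerivAt G (deriv G u) u :=
    (hG.analyticAt (isOpen_ball.mem_nhds hu)).hasStrictDerivAt
  have hFz := (hF.differentiableAt (isOpen_ball.mem_nhds hz)).hasDerivAt
  have h1 := (hs.to_localInverse hne).hasDerivAt
  have h2 := hs.eventually_right_inverse hne
  have h3 := (hs.eventually_left_inverse hne).self_of_nhds
  rw [h] at h1 h2 h3
  refine ⟨fun x => hs.localInverse G _ _ hne (F x), h3, ?_, ?_⟩
  · have := h1.comp z hFz
    rwa [inv_mul_eq_div] at this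
  · exact hFz.continuousAt.eventually h2

lemma aux_Q (G : ℂ → ℂ) (hG : DifferentiableOn ℂ G (ball (0 : ℂ) 1))
    (hne : ∀ z ∈ ball (0:ℂ) 1, deriv G z ≠ 0)
    (hre : ∀ z ∈ ball (0:ℂ) 1, z ≠ 0 → 0 < (1 + z * (deriv (deriv G) z / deriv G z)).re) :
    ∀ z ∈ ball (0:ℂ) 1, 0 < (dslope G 0 z / deriv G z).re := by
  intro z1 hz1
  set Q : ℂ → ℂ := fun z => dslope G 0 z / deriv G z with hQ
  have h0m : (0:ℂ) ∈ ball (0:ℂ) 1 := mem_ball_self one_pos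
  have hg : DifferentiableOn ℂ (dslope G 0) (ball 0 1) :=
    (differentiableOn_dslope (isOpen_ball.mem_nhds h0m)).2 hG
  have hG' : DifferentiableOn ℂ (deriv G) (ball 0 1) := hG.deriv isOpen_ball
  have hQd : DifferentiableOn ℂ Q (ball 0 1) := hg.div hG' hne
  have hode : ∀ z ∈ ball (0:ℂ) 1,
      z * deriv Q z + (1 + z * (deriv (deriv G) z / deriv G z)) * Q z = 1 := by
    intro z hz
    have hzn := isOpen_ball.mem_nhds hz
    have h1 := (hG.differentiableAt hzn).hasDerivAt
    have h2 := (hG'.differentiableAt hzn).hasDerivAt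
    have h3 := (hQd.differentiableAt hzn).hasDerivAt
    have h4 := ((hasDerivAt_id z).mul h2).mul h3
    have h5 : HasDerivAt (fun x => G x - G 0) (deriv G z) z := h1.sub_const _
    have h6 : ((fun x => id x * deriv G x) * Q) =ᶠ[nhds z] (fun x => G x - G 0) := by
      filter_upwards [hzn] with x hx
      have h7 : dslope G 0 x * x = G x - G 0 := by
        have := sub_smul_dslope G 0 x
        simpa [mul_comm] using this
      have := hne x hx
      simp only [Pi.mul_apply, hQ, id]
      rw [← h7]
      field_simp
    have h8 := (h5.congr_of_eventuallyEq h6).unique h4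
    have := hne z hz
    simp only [id, Pi.mul_apply] at h8
    field_simp
    linear_combination -h8
  obtain ⟨z0, hz0, hmin⟩ := (isCompact_closedBall (0:ℂ) ‖z1‖).exists_isMinOn
    (f := fun z => (Q z).re) ⟨0, by simp⟩ (by
      apply Complex.continuous_re.comp_continuousOn
      refine hQd.continuousOn.mono (closedBall_subset_ball (by simpa using hz1)))
  have hz0b : z0 ∈ ball (0:ℂ) 1 := closedBall_subset_ball (by simpa using hz1) hz0
  have hle1 : (Q z0).re ≤ (Q z1).re := hmin (by simp)
  refine lt_of_lt_of_le ?_ hle1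
  by_contra hcon
  push Not at hcon
  have hz00 : z0 ≠ 0 := by
    rintro rfl
    simp [hQ, dslope_same, div_self (hne 0 h0m)] at hcon
    linarith
  have hd : HasDerivAt (fun ζ : ℂ => -Q (z0 * exp ζ)) (-(deriv Q z0 * z0)) 0 := by
    have h1 : HasDerivAt (fun ζ : ℂ => z0 * exp ζ) z0 0 := by
      simpa using (Complex.hasDerivAt_exp 0).const_mul z0
    have h2 : HasDerivAt Q (deriv Q z0) (z0 * exp 0) := by
      simpa using (hQd.differentiableAt (isOpen_ball.mem_nhds hz0b)).hasDerivAt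
    exact (h2.comp (0:ℂ) h1).neg
  have hJ := aux_J _ _ hd (by
    refine Filter.Eventually.of_forall fun ζ hζ => ?_
    have : z0 * exp ζ ∈ closedBall (0:ℂ) ‖z1‖ := by
      simp only [mem_closedBall, dist_zero_right, norm_mul, Complex.norm_exp] at hz0 ⊢
      have : Real.exp ζ.re ≤ 1 := by simpa using hζ
      nlinarith [norm_nonneg z0]
    have := hmin this
    simpa using this)
  have ho := hode z0 hz0b
  have hp := hre z0 hz0b hz00
  set p := 1 + z0 * (deriv (deriv G) z0 / deriv G z0) with hpdef
  set k := z0 * deriv Q z0 with hk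
  rw [mul_comm, ← hk] at hJ
  simp only [Complex.neg_im, Complex.neg_re] at hJ
  have hr := congrArg Complex.re ho
  have hi := congrArg Complex.im ho
  simp only [Complex.add_re, Complex.mul_re, Complex.add_im, Complex.mul_im, Complex.one_re,
    Complex.one_im] at hr hi
  have hq : 0 < (Q z0).re ^ 2 + (Q z0).im ^ 2 := by
    by_contra hc
    have ha : (Q z0).re = 0 := by nlinarith [sq_nonneg (Q z0).re, sq_nonneg (Q z0).im]
    have hb : (Q z0).im = 0 := by nlinarith [sq_nonneg (Q z0).re, sq_nonneg (Q z0).im]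
    rw [ha, hb] at hr
    linarith
  have hfin : p.re * ((Q z0).re ^ 2 + (Q z0).im ^ 2) = (1 - k.re) * (Q z0).re := by
    have : k.im = 0 := by linarith
    rw [this] at hi
    linear_combination (Q z0).re * hr + (Q z0).im * hi
  nlinarith [mul_pos hp hq, mul_nonneg hJ.2 (neg_nonneg.2 hcon)]

lemma aux_inj (G : ℂ → ℂ) (hG : DifferentiableOn ℂ G (ball (0 : ℂ) 1))
    (hne : ∀ z ∈ ball (0:ℂ) 1, deriv G z ≠ 0)
    (hre : ∀ z ∈ ball (0:ℂ) 1, z ≠ 0 → 0 < (1 + z * (deriv (deriv G) z / deriv G z)).re) :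
    Set.InjOn G (ball 0 1) := by
  have hQ := aux_Q G hG hne hre
  have h0m : (0:ℂ) ∈ ball (0:ℂ) 1 := mem_ball_self one_pos
  have hg : DifferentiableOn ℂ (dslope G 0) (ball 0 1) :=
    (differentiableOn_dslope (isOpen_ball.mem_nhds h0m)).2 hG
  have hmul : ∀ x : ℂ, x * dslope G 0 x = G x - G 0 := by
    intro x
    have := sub_smul_dslope G 0 x
    simpa using this
  have hgne : ∀ z ∈ ball (0:ℂ) 1, dslope G 0 z ≠ 0 := by
    intro z hz h
    have := hQ z hz
    simp [h] at this
  have hre' : ∀ z ∈ ball (0:ℂ) 1, z ≠ 0 →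
      0 < (1 + z * (deriv (dslope G 0) z / dslope G 0 z)).re := by
    intro z hz _
    have hzn := isOpen_ball.mem_nhds hz
    have h1 := ((hG.differentiableAt hzn).hasDerivAt).sub_const (G 0)
    have h2 := (hasDerivAt_id z).mul (hg.differentiableAt hzn).hasDerivAt
    have h3 : (id * dslope G 0) = fun x => G x - G 0 := by
      funext x; exact hmul x
    rw [h3] at h2
    have h4 := h1.unique h2
    simp only [id, one_mul] at h4
    have h5 : 1 + z * (deriv (dslope G 0) z / dslope G 0 z)
        = (dslope G 0 z / deriv G z)⁻¹ := by
      have := hgne z hz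
      rw [inv_div, h4]
      field_simp
    rw [h5, Complex.inv_re]
    have h6 := hQ z hz
    refine div_pos h6 (normSq_pos.2 ?_)
    intro h; rw [h] at h6; simp at h6
  intro w hw u hu hwu
  have heq : w * dslope G 0 w = u * dslope G 0 u := by rw [hmul, hmul, hwu]
  by_cases hw0 : w = 0
  · rw [hw0, zero_mul, eq_comm, mul_eq_zero] at heq
    rw [hw0, heq.resolve_right (hgne u hu)]
  by_cases hu0 : u = 0
  · rw [hu0, zero_mul, mul_eq_zero] at heq
    exact absurd (heq.resolve_right (hgne w hw)) hw0
  exact (aux_S _ hg hgne hre' w u hw hu hw0 hu0 1 one_pos le_rfl (by simpa using heq)).2 rfl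

/-- Local Jack lemma. -/
lemma aux_jack (w : ℂ → ℂ) (z0 d : ℂ) (l : ℝ) (hz0 : z0 ≠ 0) (hw0 : w z0 ≠ 0)
    (hd : HasDerivAt w d z0) (heq : ‖w z0‖ = l * ‖z0‖)
    (hle : ∀ᶠ z in nhds z0, ‖z‖ ≤ ‖z0‖ → ‖w z‖ ≤ l * ‖z‖) :
    ∃ k : ℝ, 1 ≤ k ∧ z0 * d = k * w z0 := by
  have h1 : HasDerivAt (fun ζ : ℂ => z0 * exp ζ) z0 0 := by
    simpa using (Complex.hasDerivAt_exp 0).const_mul z0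
  have h2 : HasDerivAt w d (z0 * exp 0) := by simpa using hd
  have h3 : HasDerivAt (fun ζ : ℂ => w (z0 * exp ζ) / w z0) (d * z0 / w z0) 0 :=
    (h2.comp (0:ℂ) h1).div_const _
  have h4 : HasDerivAt (fun ζ : ℂ => log (w (z0 * exp ζ) / w z0) - ζ) (d * z0 / w z0 - 1) 0 := by
    have h5 := (h3.clog (by simp [hw0])).sub (hasDerivAt_id (0:ℂ))
    refine h5.congr_deriv ?_
    simp [hw0]
  have hc : Filter.Tendsto (fun ζ : ℂ => z0 * exp ζ) (nhds 0) (nhds z0) := by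
    simpa using h1.continuousAt.tendsto
  have hne : ∀ᶠ z in nhds z0, w z ≠ 0 := hd.continuousAt.eventually_ne hw0
  obtain ⟨him, hre⟩ := aux_J _ _ h4 (by
    filter_upwards [hc.eventually hle, hc.eventually hne] with ζ ha hb hζ
    have hE : Real.exp ζ.re ≤ 1 := by simpa using hζ
    have hn : ‖z0 * exp ζ‖ = ‖z0‖ * Real.exp ζ.re := by rw [norm_mul, Complex.norm_exp]
    have h6 := ha (by rw [hn]; nlinarith [norm_nonneg z0])
    rw [hn] at h6
    have hwp : 0 < ‖w z0‖ := norm_pos_iff.2 hw0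
    have h7 : ‖w (z0 * exp ζ) / w z0‖ ≤ Real.exp ζ.re := by
      rw [norm_div, div_le_iff₀ hwp, heq]
      linarith
    have h8 := Real.log_le_log (norm_pos_iff.2 (div_ne_zero hb hw0)) h7
    rw [Real.log_exp] at h8
    simp only [Complex.sub_re, log_re]
    simp [hw0]
    simpa using h8)
  refine ⟨(d * z0 / w z0).re, ?_, ?_⟩
  · simp only [Complex.sub_re, Complex.one_re] at hre; linarith
  · have h9 : ((d * z0 / w z0).re : ℂ) = d * z0 / w z0 := by
      apply Complex.ext
      · simp
      · simp only [Complex.sub_im, Complex.one_im] at him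
        simp only [Complex.ofReal_im]; linarith
    rw [h9]
    field_simp

lemma aux_main (F G ω : ℂ → ℂ)
    (hF : DifferentiableOn ℂ F (ball (0 : ℂ) 1))
    (hG : DifferentiableOn ℂ G (ball (0 : ℂ) 1))
    (h0 : F 0 = G 0)
    (hne : ∀ z ∈ ball (0:ℂ) 1, deriv G z ≠ 0)
    (hre : ∀ z ∈ ball (0:ℂ) 1, z ≠ 0 → 0 < (1 + z * (deriv (deriv G) z / deriv G z)).re)
    (hinj : Set.InjOn G (ball 0 1))
    (hω : DifferentiableOn ℂ ω (ball (0 : ℂ) 1)) (hω0 : ω 0 = 0)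
    (hωm : ∀ z ∈ ball (0 : ℂ) 1, ω z ∈ ball (0 : ℂ) 1)
    (heq : ∀ z ∈ ball (0 : ℂ) 1, z * deriv F z = ω z * deriv G (ω z)) :
    ∀ z ∈ ball (0:ℂ) 1, ∃ u ∈ ball (0:ℂ) 1, G u = F z := by
  have h0m : (0:ℂ) ∈ ball (0:ℂ) 1 := mem_ball_self one_pos
  have hG' : DifferentiableOn ℂ (deriv G) (ball 0 1) := hG.deriv isOpen_ball
  have hF' : DifferentiableOn ℂ (deriv F) (ball 0 1) := hF.deriv isOpen_ball
  intro z1 hz1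
  by_cases hz10 : z1 = 0
  · exact ⟨0, h0m, by rw [hz10, h0]⟩
  have hz1' : ‖z1‖ < 1 := by simpa using hz1
  have hz1p : 0 < ‖z1‖ := norm_pos_iff.2 hz10
  obtain ⟨l, hl1, hl2⟩ : ∃ l : ℝ, 1 < l ∧ l * ‖z1‖ < 1 := by
    obtain ⟨l, ha, hb⟩ := exists_between ((one_lt_inv₀ hz1p).2 hz1')
    exact ⟨l, ha, by rwa [← lt_div_iff₀ hz1p, one_div]⟩
  -- the good set
  set O : Set ℂ := {z | z ∈ ball (0:ℂ) 1 ∧ ∃ u ∈ ball (0:ℂ) 1, ‖u‖ < l * ‖z‖ ∧ G u = F z} with hO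
  have hOopen : IsOpen O := by
    rw [isOpen_iff_mem_nhds]
    rintro z ⟨hz, u, hu, hul, hGu⟩
    obtain ⟨w, hwz, hwd, hwe⟩ := aux_LI F G hF hG z u hz hu (hne u hu) hGu
    have hwc := hwd.continuousAt
    have e1 : ∀ᶠ x in nhds z, w x ∈ ball (0:ℂ) 1 :=
      hwc.eventually (isOpen_ball.mem_nhds (by rwa [hwz]))
    have e2 : ∀ᶠ x in nhds z, ‖w x‖ < l * ‖x‖ := by
      refine hwc.norm.eventually_lt (g := fun x => l * ‖x‖) (by fun_prop) (by rwa [hwz])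
    filter_upwards [isOpen_ball.mem_nhds hz, e1, e2, hwe] with x hx h1 h2 h3
    exact ⟨hx, w x, h1, h2, h3⟩
  -- near zero
  obtain ⟨δ, hδ, hδO⟩ : ∃ δ > 0, ∀ z : ℂ, ‖z‖ < δ → z ≠ 0 → z ∈ O := by
    have hd0 : deriv F 0 / deriv G 0 = deriv ω 0 := by
      have a1 : HasDerivAt (fun z => z * deriv F z) (deriv F 0) 0 := by
        have := (hasDerivAt_id (0:ℂ)).mul
          (hF'.differentiableAt (isOpen_ball.mem_nhds h0m)).hasDerivAt
        refine this.congr_deriv ?_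
        simp
      have a2 : HasDerivAt (fun z => ω z * deriv G (ω z)) (deriv ω 0 * deriv G 0) 0 := by
        have b1 := (hω.differentiableAt (isOpen_ball.mem_nhds h0m)).hasDerivAt
        have b2 : HasDerivAt (deriv G) (deriv (deriv G) 0) (ω 0) := by
          rw [hω0]
          exact (hG'.differentiableAt (isOpen_ball.mem_nhds h0m)).hasDerivAt
        refine (b1.mul (b2.comp (0:ℂ) b1)).congr_deriv ?_
        simp [hω0]
      have a3 : (fun z => z * deriv F z) =ᶠ[nhds 0] (fun z => ω z * deriv G (ω z)) := by
        filter_upwards [isOpen_ball.mem_nhds h0m] with z hz using heq z hz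
      have a4 := a1.unique (a2.congr_of_eventuallyEq a3)
      rw [a4, mul_div_cancel_right₀ _ (hne 0 h0m)]
    have hn1 : ‖deriv ω 0‖ ≤ 1 := norm_deriv_le_one_of_mapsTo_ball hω
      (fun z hz => by rw [hω0]; exact ball_subset_closedBall (hωm z hz)) one_pos
    obtain ⟨w, hwz, hwd, hwe⟩ := aux_LI F G hF hG 0 0 h0m h0m (hne 0 h0m) h0.symm
    rw [hd0] at hwd
    have hwc := hwd.continuousAt
    have e1 : ∀ᶠ x in nhds 0, w x ∈ ball (0:ℂ) 1 :=
      hwc.eventually (isOpen_ball.mem_nhds (by rwa [hwz]))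
    have e2 := (hasDerivAt_iff_tendsto_slope.1 hwd).norm.eventually_lt_const
      (hn1.trans_lt hl1)
    rw [eventually_nhdsWithin_iff] at e2
    have e3 : ∀ᶠ x in nhds (0:ℂ), x ≠ 0 → x ∈ O := by
      filter_upwards [isOpen_ball.mem_nhds h0m, e1, e2, hwe] with x hx h1 h2 h3 hx0
      refine ⟨hx, w x, h1, ?_, h3⟩
      have h4 := h2 hx0
      rw [slope_def_field, hwz, sub_zero, sub_zero, norm_div,
        div_lt_iff₀ (norm_pos_iff.2 hx0)] at h4
      exact h4
    obtain ⟨δ, hδ, hh⟩ := Metric.eventually_nhds_iff.1 e3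
    exact ⟨δ, hδ, fun z hz hz0 => hh (by simpa using hz) hz0⟩
  by_contra hcon
  have hz1O : z1 ∉ O := fun ⟨_, u, hu, _, h⟩ => hcon ⟨u, hu, h⟩
  set K : Set ℂ := closedBall (0:ℂ) ‖z1‖ \ (ball 0 δ ∪ O) with hK
  have hKc : IsCompact K := (isCompact_closedBall _ _).diff (isOpen_ball.union hOopen)
  have hz1K : z1 ∈ K := by
    refine ⟨by simp, ?_⟩
    rintro (h | h)
    · exact hz1O (hδO z1 (by simpa using h) hz10)
    · exact hz1O h
  obtain ⟨z0, hz0K, hmin⟩ := hKc.exists_isMinOn ⟨z1, hz1K⟩ continuous_norm.continuousOn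
  have hz0le : ‖z0‖ ≤ ‖z1‖ := by simpa using hz0K.1
  have hz0O : z0 ∉ O := fun h => hz0K.2 (Or.inr h)
  have hz00 : z0 ≠ 0 := by
    rintro rfl
    exact hz0K.2 (Or.inl (mem_ball_self hδ))
  have hz0p : 0 < ‖z0‖ := norm_pos_iff.2 hz00
  have hz0b : z0 ∈ ball (0:ℂ) 1 := by simpa using hz0le.trans_lt hz1'
  have hlz0 : l * ‖z0‖ < 1 := by nlinarith
  have hlt : ∀ z : ℂ, ‖z‖ < ‖z0‖ → z ≠ 0 → z ∈ O := by
    intro z hz hzne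
    by_contra hzO
    have : z ∈ K := by
      refine ⟨by simpa using hz.le.trans hz0le, ?_⟩
      rintro (h | h)
      · exact hzO (hδO z (by simpa using h) hzne)
      · exact hzO h
    have := hmin this
    simp only [Set.mem_ofPred_eq] at this
    linarith
  have hsub : closedBall (0:ℂ) (l * ‖z0‖) ⊆ ball 0 1 := closedBall_subset_ball hlz0
  have hcl : ∀ z ∈ closedBall (0:ℂ) ‖z0‖, F z ∈ G '' closedBall 0 (l * ‖z0‖) := by
    have hcomp : IsCompact (G '' closedBall 0 (l * ‖z0‖)) :=
      (isCompact_closedBall _ _).image_of_continuousOn (hG.continuousOn.mono hsub)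
    have hmaps : Set.MapsTo F (ball 0 ‖z0‖) (G '' closedBall 0 (l * ‖z0‖)) := by
      intro z hz
      have hz' : ‖z‖ < ‖z0‖ := by simpa using hz
      by_cases hzz : z = 0
      · exact ⟨0, by simp; positivity, by rw [hzz, h0]⟩
      · obtain ⟨_, u, hu, hul, hGu⟩ := hlt z hz' hzz
        refine ⟨u, ?_, hGu⟩
        have : l * ‖z‖ ≤ l * ‖z0‖ := by nlinarith
        simpa using hul.le.trans this
    have hcont : ContinuousOn F (closure (ball (0:ℂ) ‖z0‖)) := by
      rw [closure_ball _ hz0p.ne']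
      exact hF.continuousOn.mono (closedBall_subset_ball (by simpa using hz0b))
    have := hmaps.closure_of_continuousOn hcont
    rw [closure_ball _ hz0p.ne', hcomp.isClosed.closure_eq] at this
    exact this
  obtain ⟨w0, hw0c, hGw0⟩ := hcl z0 (by simp)
  have hw0b : w0 ∈ ball (0:ℂ) 1 := hsub hw0c
  have hw0n : ‖w0‖ = l * ‖z0‖ := by
    refine le_antisymm (by simpa using hw0c) ?_
    by_contra h
    push Not at h
    exact hz0O ⟨hz0b, w0, hw0b, h, hGw0⟩
  have hw00 : w0 ≠ 0 := norm_pos_iff.1 (by rw [hw0n]; positivity)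
  obtain ⟨w, hwz, hwd, hwe⟩ := aux_LI F G hF hG z0 w0 hz0b hw0b (hne w0 hw0b) hGw0
  have e1 : ∀ᶠ x in nhds z0, w x ∈ ball (0:ℂ) 1 :=
    hwd.continuousAt.eventually (isOpen_ball.mem_nhds (by rwa [hwz]))
  have hjle : ∀ᶠ z in nhds z0, ‖z‖ ≤ ‖z0‖ → ‖w z‖ ≤ l * ‖z‖ := by
    filter_upwards [e1, hwe, isOpen_ne.mem_nhds hz00] with z h1 h2 h3 hz
    rcases hz.lt_or_eq with h | h
    · obtain ⟨_, u, hu, hul, hGu⟩ := hlt z h h3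
      rw [hinj h1 hu (h2.trans hGu.symm)]
      exact hul.le
    · obtain ⟨u, hu, hGu⟩ := hcl z (by simpa using hz)
      rw [hinj h1 (hsub hu) (h2.trans hGu.symm), h]
      simpa using hu
  obtain ⟨k, hk1, hk⟩ := aux_jack w z0 _ l hz00 (by rwa [hwz]) hwd (by rwa [hwz]) hjle
  rw [hwz] at hk
  have hGw := hne w0 hw0b
  have hkp : 0 < k := by linarith
  have hkc : (k : ℂ) ≠ 0 := by exact_mod_cast hkp.ne'
  have hH : k * (w0 * deriv G w0) = ω z0 * deriv G (ω z0) := by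
    rw [← heq z0 hz0b, ← mul_assoc, ← hk]
    field_simp
  have hω00 : ω z0 ≠ 0 := by
    intro h
    rw [h, zero_mul] at hH
    exact mul_ne_zero hkc (mul_ne_zero hw00 hGw) hH
  have hS := (aux_S (deriv G) hG' hne hre w0 (ω z0) hw0b (hωm z0 hz0b) hw00 hω00 k⁻¹
    (inv_pos.2 hkp) (inv_le_one_of_one_le₀ hk1) (by
      rw [← hH]; push_cast; field_simp)).1
  have hSch : ‖ω z0‖ ≤ ‖z0‖ := norm_le_norm_of_mapsTo_ball hω
    (fun z hz => ball_subset_closedBall (hωm z hz)) hω0 (by simpa using hz0b)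
  nlinarith

theorem suffridge_lemma (F G : ℂ → ℂ)
    (hF : DifferentiableOn ℂ F (ball (0 : ℂ) 1))
    (hG : DifferentiableOn ℂ G (ball (0 : ℂ) 1))
    (h0 : F 0 = G 0)
    (H : ℂ → ℂ) (hH : ∀ z : ℂ, H z = z * deriv G z)
    (hHinj : Set.InjOn H (ball (0 : ℂ) 1))
    (hH0 : H 0 = 0) (hH0' : deriv H 0 ≠ 0)
    (hstar : ∀ z ∈ ball (0 : ℂ) 1, z ≠ 0 → 0 < (z * deriv H z / H z).re)
    (hsub : Subord (fun z => z * deriv F z) (fun z => z * deriv G z)) :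
    Subord F G := by
  have h0m : (0:ℂ) ∈ ball (0:ℂ) 1 := mem_ball_self one_pos
  have hG' : DifferentiableOn ℂ (deriv G) (ball 0 1) := hG.deriv isOpen_ball
  have hHd : ∀ z ∈ ball (0:ℂ) 1, deriv H z = deriv G z + z * deriv (deriv G) z := by
    intro z hz
    have h1 := (hasDerivAt_id z).mul
      (hG'.differentiableAt (isOpen_ball.mem_nhds hz)).hasDerivAt
    have h2 : (id * deriv G) = H := by funext x; rw [hH]; rfl
    rw [h2] at h1
    rw [h1.deriv]; simp
  have hne : ∀ z ∈ ball (0:ℂ) 1, deriv G z ≠ 0 := by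
    intro z hz h
    by_cases hz0 : z = 0
    · subst hz0
      apply hH0'
      rw [hHd 0 h0m, h]; simp
    · apply hz0
      apply hHinj hz h0m
      rw [hH, h, hH0, mul_zero]
  have hre : ∀ z ∈ ball (0:ℂ) 1, z ≠ 0 →
      0 < (1 + z * (deriv (deriv G) z / deriv G z)).re := by
    intro z hz hz0
    have h1 := hstar z hz hz0
    have h2 := hne z hz
    convert h1 using 2
    rw [hHd z hz, hH]
    field_simp
  have hinj := aux_inj G hG hne hre
  obtain ⟨ω, hω, hω0, hωm, heq⟩ := hsub
  have hex := aux_main F G ω hF hG h0 hne hre hinj hω hω0 hωm heq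
  choose! w hwb hwG using hex
  refine ⟨w, ?_, ?_, hwb, fun z hz => (hwG z hz).symm⟩
  · intro z hz
    obtain ⟨v, hvz, hvd, hve⟩ := aux_LI F G hF hG z (w z) hz (hwb z hz)
      (hne _ (hwb z hz)) (hwG z hz)
    have e1 : ∀ᶠ x in nhds z, v x ∈ ball (0:ℂ) 1 :=
      hvd.continuousAt.eventually (isOpen_ball.mem_nhds (by rw [hvz]; exact hwb z hz))
    have e2 : w =ᶠ[nhds z] v := by
      filter_upwards [e1, hve, isOpen_ball.mem_nhds hz] with x h1 h2 h3
      exact hinj (hwb x h3) h1 ((hwG x h3).trans h2.symm)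
    exact (hvd.congr_of_eventuallyEq e2).differentiableAt.differentiableWithinAt
  · exact hinj (hwb 0 h0m) h0m ((hwG 0 h0m).trans h0)
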